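/- arXiv:1602.06685 — 4 statements merged into one kernel-verified Lean document; each statement's English description precedes it below -/
import Mathlib

section
/- Let 0 ≤ s ≤ t ≤ T and let h : Ω^t → ℝ be ℱ_t-measurable with ∫_{Ω^t} h⁺ dP_t < ∞. Then the generalized conditional expectation E(h | ℱ_s) (with ℱ_s viewed as a sub-σ-algebra of ℱ_T via the coordinate projections) is P_s-almost surely equal to φ(ω_1,…,ω_s), where φ(ω_1,…,ω_s) := ∫_{Ω_{s+1}×⋯×Ω_t} h(ω_1,…,ω_s,ω_{s+1},…,ω_t) q_t(dω_t|ω^{t−1}) ⋯ q_{s+1}(dω_{s+1}|ω^s) is the iterated kernel integral (defined in the generalized sense). -/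
/-! The tower property for generalised conditional expectations along stochastic kernels.

Integrating `f` over one coordinate gives `g = F - G`, where `F` and `G` are the kernel
integrals of `f⁺` and `f⁻`. Then `g⁺ + G = g⁻ + F`, an identity of nonnegative functions
(`ePos_sub_add`). Since `∫ g⁺ ≤ ∫ F = ∫ f⁺ < ∞`, integrating it and moving these two finite
terms across shows `∫ F - ∫ G = ∫ g⁺ - ∫ g⁻`, so `f` and `g` have the same generalised
integral (`geint_Pmes_succ`). Moreover `∫ g⁺` is again finite and multiplication by the
indicator of an event in the earlier coordinates commutes with the operation, so the argument
iterates down to time `s` (`iterInt_spec`). The coordinates after `t = s + n` integrate out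
trivially because the kernels have mass one (`geint_Pmes_restr`). -/


open MeasureTheory ProbabilityTheory Set
open scoped ENNReal InnerProductSpace

noncomputable section

/-- `d`-dimensional Euclidean space `ℝ^d`. -/
abbrev Evec (d : ℕ) : Type := EuclideanSpace ℝ (Fin d)

/-- The history space `Ω^t = Ω_1 × ⋯ × Ω_t` (with `Ω^0` a one-point space). -/
def Hist (Ωs : ℕ → Type) : ℕ → Type
  | 0 => PUnit
  | t + 1 => Hist Ωs t × Ωs (t + 1)

/-- The product σ-algebra `ℱ_t = 𝒢_1 ⊗ ⋯ ⊗ 𝒢_t` on `Ω^t`. -/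
instance histMS (Ωs : ℕ → Type) [m : ∀ t, MeasurableSpace (Ωs t)] :
    ∀ t, MeasurableSpace (Hist Ωs t)
  | 0 => inferInstanceAs (MeasurableSpace PUnit)
  | t + 1 => @Prod.instMeasurableSpace _ _ (histMS Ωs t) (m (t + 1))

variable {Ωs : ℕ → Type} [∀ t, MeasurableSpace (Ωs t)] {d : ℕ}

/-- The measures `P_t` on `Ω^t` obtained by iterated integration of the kernels
`q_{s+1}` (here `q 0` applied to the unique point of `Ω^0` plays the role of `P_1`). -/
def Pmes (q : ∀ t, Kernel (Hist Ωs t) (Ωs (t + 1))) : ∀ t, Measure (Hist Ωs t)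
  | 0 => Measure.dirac PUnit.unit
  | t + 1 => (Pmes q t).bind (fun ω => ((q t) ω).map (fun y => ((ω, y) : Hist Ωs (t + 1))))

/-- The positive part of an extended real, as an element of `[0,∞]`. -/
def ePos (x : EReal) : ℝ≥0∞ := if x = ⊤ then ⊤ else ENNReal.ofReal x.toReal

/-- The generalised integral `∫ f dμ := ∫ f⁺ dμ − ∫ f⁻ dμ` of an extended-real valued
function, with values in `ℝ ∪ {±∞}`. -/
def geint {α : Type*} [MeasurableSpace α] (μ : Measure α) (f : α → EReal) : EReal :=
  ((∫⁻ a, ePos (f a) ∂μ : ℝ≥0∞) : EReal) - ((∫⁻ a, ePos (-f a) ∂μ : ℝ≥0∞) : EReal)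

/-- Projection (restriction) `Ω^{s+n} → Ω^s`. -/
def restr : ∀ (s n : ℕ), Hist Ωs (s + n) → Hist Ωs s
  | _, 0, ω => ω
  | s, n + 1, ω => restr s n ω.1

/-- The iterated kernel integral: integrate out the coordinates `s+1, …, s+n`
(generalised integrals throughout). -/
def iterInt (q : ∀ t, Kernel (Hist Ωs t) (Ωs (t + 1))) :
    ∀ (s n : ℕ), (Hist Ωs (s + n) → EReal) → Hist Ωs s → EReal
  | _, 0, h => h
  | s, n + 1, h =>
      iterInt q s n (fun ω => geint ((q (s + n)) ω)
        (fun y => h ((ω, y) : Hist Ωs (s + n + 1))))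

/-! ### Arithmetic of generalised differences -/

theorem ePos_eq_toENNReal (x : EReal) : ePos x = x.toENNReal := rfl

theorem measurable_ePos : Measurable ePos := measurable_ereal_toENNReal

theorem ePos_zero : ePos 0 = 0 := EReal.toENNReal_zero

theorem geint_zero {α : Type*} [MeasurableSpace α] (μ : Measure α) :
    geint μ (fun _ => 0) = 0 := by
  simp [geint, ePos_zero]

theorem ePos_sub_le (a b : ℝ≥0∞) : ePos ((a : EReal) - b) ≤ a := by
  rw [ePos_eq_toENNReal, EReal.toENNReal_sub (EReal.coe_ennreal_nonneg b)]
  simp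

/-- With `x = a - b`, the identity `x⁺ + b = x⁻ + a`; it is the subtraction-free form of
`x = x⁺ - x⁻` and can be integrated termwise. For `a = ∞` both sides are `∞`, also when
`b = ∞` and `x = -∞` by convention. -/
theorem ePos_sub_add (a b : ℝ≥0∞) :
    ePos ((a : EReal) - b) + b = ePos (-((a : EReal) - b)) + a := by
  by_cases ha : a = ⊤
  · subst ha
    by_cases hb : b = ⊤
    · simp [hb]
    · lift b to NNReal using hb
      have hx : ((⊤ : ℝ≥0∞) : EReal) - ((b : ℝ≥0∞) : EReal) = ⊤ := EReal.top_sub_coe (b : ℝ)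
      rw [hx, ePos_eq_toENNReal]
      simp
  have hneg : -((a : EReal) - b) = b - a := by
    rw [EReal.neg_sub] <;> simp [add_comm, sub_eq_add_neg, ha]
  rw [hneg, ePos_eq_toENNReal, ePos_eq_toENNReal,
    EReal.toENNReal_sub (EReal.coe_ennreal_nonneg b),
    EReal.toENNReal_sub (EReal.coe_ennreal_nonneg a)]
  simp only [EReal.toENNReal_coe]
  rw [tsub_add_eq_max, tsub_add_eq_max, max_comm]

theorem coe_sub_eq_of_add_eq {a b c d : ℝ≥0∞} (ha : a ≠ ⊤) (hc : c ≠ ⊤)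
    (h : a + b = d + c) : (c : EReal) - b = a - d := by
  lift a to NNReal using ha
  lift c to NNReal using hc
  induction b with
  | top =>
    have hd : d = ⊤ := by
      have : d + (c : ℝ≥0∞) = ⊤ := by rw [← h]; simp
      simpa using this
    subst hd
    simp [sub_eq_add_neg]
  | coe b =>
    induction d with
    | top => exact absurd h (by simp [← ENNReal.coe_add])
    | coe d =>
      have h' : (a : ℝ) + b = d + c := by exact_mod_cast h
      have e : ∀ x : NNReal, (((x : NNReal) : ℝ≥0∞) : EReal) = ((x : ℝ) : EReal) := fun x => rfl
      rw [e, e, e, e, ← EReal.coe_sub, ← EReal.coe_sub]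
      congr 1
      linarith

/-! ### Integration against the measures `P_t` -/

section

variable (q : ∀ t, Kernel (Hist Ωs t) (Ωs (t + 1))) [∀ t, IsMarkovKernel (q t)]

theorem lintegral_Pmes_succ (t : ℕ) {F : Hist Ωs (t + 1) → ℝ≥0∞} (hF : Measurable F) :
    ∫⁻ x, F x ∂(Pmes q (t + 1))
      = ∫⁻ ω, ∫⁻ y, F ((ω, y) : Hist Ωs (t + 1)) ∂(q t ω) ∂(Pmes q t) := by
  -- The integrand kernel `ω ↦ δ_ω ⊗ q_t(ω)` is measurable, being a product of kernels.
  have hk : (fun ω => ((q t) ω).map (fun y => ((ω, y) : Hist Ωs t × Ωs (t + 1))))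
      = ⇑(Kernel.id ×ₖ q t) := by
    funext ω
    rw [Kernel.prod_apply, Kernel.id_apply, Measure.dirac_prod]
  have hm : Measurable
      (fun ω => ((q t) ω).map (fun y => ((ω, y) : Hist Ωs t × Ωs (t + 1)))) := by
    rw [hk]; exact Kernel.measurable _
  refine (Measure.lintegral_bind (m := Pmes q t) (f := F) hm.aemeasurable
    hF.aemeasurable).trans ?_
  refine lintegral_congr fun ω => ?_
  exact lintegral_map hF measurable_prodMk_left

theorem measurable_lintegral_last (t : ℕ) {F : Hist Ωs (t + 1) → ℝ≥0∞} (hF : Measurable F) :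
    Measurable fun ω => ∫⁻ y, F ((ω, y) : Hist Ωs (t + 1)) ∂(q t ω) :=
  Measurable.lintegral_kernel_prod_right' (κ := q t) hF

theorem measurable_restr (s : ℕ) : ∀ n, Measurable (restr (Ωs := Ωs) s n)
  | 0 => measurable_id
  | n + 1 => (measurable_restr s n).comp (measurable_fst (α := Hist Ωs (s + n)))

/-- `P_t` is the image of `P_{t+m}` under the projection, since the kernels are stochastic. -/
theorem lintegral_Pmes_restr (t : ℕ) {F : Hist Ωs t → ℝ≥0∞} (hF : Measurable F) (m : ℕ) :
    ∫⁻ x, F (restr t m x) ∂(Pmes q (t + m)) = ∫⁻ ω, F ω ∂(Pmes q t) := by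
  induction m with
  | zero => rfl
  | succ m ih =>
    refine (lintegral_Pmes_succ q (t + m) (hF.comp (measurable_restr t (m + 1)))).trans ?_
    rw [← ih]
    refine lintegral_congr fun ω => ?_
    change ∫⁻ _, F (restr t m ω) ∂(q (t + m) ω) = _
    simp

theorem geint_Pmes_restr (t : ℕ) {f : Hist Ωs t → EReal} (hf : Measurable f) (m : ℕ) :
    geint (Pmes q (t + m)) (fun x => f (restr t m x)) = geint (Pmes q t) f := by
  unfold geint
  have hp : Measurable fun x => ePos (f x) := measurable_ePos.comp hf
  have hn : Measurable fun x => ePos (-f x) := measurable_ePos.comp hf.neg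
  rw [lintegral_Pmes_restr q t hp m, lintegral_Pmes_restr q t hn m]

/-! ### Integrating out coordinates -/

/-- The generalised integral of `f` over the last coordinate, given the history before it. -/
def lastInt (t : ℕ) (f : Hist Ωs (t + 1) → EReal) (ω : Hist Ωs t) : EReal :=
  geint (q t ω) (fun y => f ((ω, y) : Hist Ωs (t + 1)))

theorem measurable_lastInt (t : ℕ) {f : Hist Ωs (t + 1) → EReal} (hf : Measurable f) :
    Measurable (lastInt q t f) := by
  have h1 := measurable_lintegral_last q t (measurable_ePos.comp hf)
  have h2 := measurable_lintegral_last q t (measurable_ePos.comp hf.neg)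
  exact h1.coe_ereal_ennreal.sub h2.coe_ereal_ennreal

theorem lintegral_ePos_lastInt_le (t : ℕ) {f : Hist Ωs (t + 1) → EReal} (hf : Measurable f) :
    ∫⁻ ω, ePos (lastInt q t f ω) ∂(Pmes q t) ≤ ∫⁻ x, ePos (f x) ∂(Pmes q (t + 1)) := by
  have hp : Measurable fun x => ePos (f x) := measurable_ePos.comp hf
  rw [lintegral_Pmes_succ q t hp]
  exact lintegral_mono fun ω => ePos_sub_le _ _

/-- Fubini for generalised integrals, one coordinate at a time. -/
theorem geint_Pmes_succ (t : ℕ) {f : Hist Ωs (t + 1) → EReal} (hf : Measurable f)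
    (hfin : ∫⁻ x, ePos (f x) ∂(Pmes q (t + 1)) < ⊤) :
    geint (Pmes q (t + 1)) f = geint (Pmes q t) (lastInt q t f) := by
  have hp : Measurable fun x => ePos (f x) := measurable_ePos.comp hf
  have hn : Measurable fun x => ePos (-f x) := measurable_ePos.comp hf.neg
  have hF := measurable_lintegral_last q t hp
  have hG := measurable_lintegral_last q t hn
  have hle := lintegral_ePos_lastInt_le q t hf
  refine coe_sub_eq_of_add_eq (hle.trans_lt hfin).ne hfin.ne ?_
  rw [lintegral_Pmes_succ q t hn, lintegral_Pmes_succ q t hp, ← lintegral_add_right _ hG,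
    ← lintegral_add_right _ hF]
  exact lintegral_congr fun ω => ePos_sub_add _ _

theorem lintegral_ePos_indicator_le {α : Type*} [MeasurableSpace α] (μ : Measure α) (A : Set α)
    (f : α → EReal) : ∫⁻ x, ePos (A.indicator f x) ∂μ ≤ ∫⁻ x, ePos (f x) ∂μ := by
  refine lintegral_mono fun x => ?_
  by_cases hx : x ∈ A <;> simp [hx, ePos_zero]

/-- The tower property: the iterated kernel integral has the same generalised integrals over
events determined by the first `s` coordinates as the function itself. -/
theorem iterInt_spec (s n : ℕ) {f : Hist Ωs (s + n) → EReal} (hf : Measurable f)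
    (hfin : ∫⁻ x, ePos (f x) ∂(Pmes q (s + n)) < ⊤) :
    Measurable (iterInt q s n f) ∧ ∀ B : Set (Hist Ωs s), MeasurableSet B →
      geint (Pmes q (s + n)) ((restr s n ⁻¹' B).indicator f)
        = geint (Pmes q s) (B.indicator (iterInt q s n f)) := by
  induction n with
  | zero => exact ⟨hf, fun B _ => rfl⟩
  | succ n ih =>
    have hg := measurable_lastInt q (s + n) hf
    obtain ⟨hm, hB⟩ := ih hg ((lintegral_ePos_lastInt_le q (s + n) hf).trans_lt hfin)
    refine ⟨hm, fun B hBm => ?_⟩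
    refine Eq.trans ?_ (hB B hBm)
    refine (geint_Pmes_succ q (s + n) (hf.indicator (measurable_restr s (n + 1) hBm))
      ((lintegral_ePos_indicator_le _ _ _).trans_lt hfin)).trans ?_
    congr 1
    funext ω
    -- The event does not involve the last coordinate, so its indicator is constant in `y`.
    by_cases hω : restr s n ω ∈ B
    · rw [indicator_of_mem (show ω ∈ restr s n ⁻¹' B from hω)]
      refine congrArg (geint _) (funext fun y => ?_)
      exact indicator_of_mem (s := restr s (n + 1) ⁻¹' B) hω f
    · rw [indicator_of_notMem (show ω ∉ restr s n ⁻¹' B from hω)]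
      refine Eq.trans (congrArg (geint _) (funext fun y => ?_)) (geint_zero _)
      exact indicator_of_notMem (s := restr s (n + 1) ⁻¹' B) hω f

end

/-- Let `0 ≤ s ≤ t ≤ T` (here `t = s + n`, `T = (s+n) + m`) and let
`h : Ω^t → ℝ` be `ℱ_t`-measurable with `∫ h⁺ dP_t < ∞`. Then the iterated kernel
integral `φ(ω^s) = ∫⋯∫ h dq_t ⋯ dq_{s+1}` is `ℱ_s`-measurable and is `P_s`-a.s. equal
to the generalised conditional expectation `E(h | ℱ_s)` (with `ℱ_s` viewed as a
sub-σ-algebra of `ℱ_T` via the coordinate projections), i.e. for every `B ∈ ℱ_s` the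
generalised integral of `h` over the event `{ω^T : proj_s ω^T ∈ B}` equals the
generalised integral of `φ` over `B`. -/
theorem conditional_expectation_eq_iterated_kernel_integral
    (q : ∀ t, Kernel (Hist Ωs t) (Ωs (t + 1))) [∀ t, IsMarkovKernel (q t)]
    (s n m : ℕ) (h : Hist Ωs (s + n) → ℝ) (hmeas : Measurable h)
    (hint : ∫⁻ ω, ENNReal.ofReal (h ω) ∂(Pmes q (s + n)) < ⊤) :
    Measurable (iterInt q s n (fun ω => ((h ω : ℝ) : EReal))) ∧
    ∀ B : Set (Hist Ωs s), MeasurableSet B →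
      geint (Pmes q (s + n + m))
        (fun ωT => Set.indicator {ω' | restr s n (restr (s + n) m ω') ∈ B}
          (fun ω' => ((h (restr (s + n) m ω') : ℝ) : EReal)) ωT)
        = geint (Pmes q s)
            (B.indicator (iterInt q s n (fun ω => ((h ω : ℝ) : EReal)))) := by
  have hf : Measurable fun ω => ((h ω : ℝ) : EReal) := hmeas.coe_real_ereal
  obtain ⟨hm, hB⟩ := iterInt_spec q s n hf hint
  refine ⟨hm, fun B hBm => ?_⟩
  rw [← hB B hBm]
  exact geint_Pmes_restr q (s + n) (hf.indicator (measurable_restr s n hBm)) m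
end
end

section
/- Let 0 ≤ t ≤ T−1. Define the random sets D̃^{t+1}(ω^t) := support of the law of ΔS_{t+1}(ω^t,·) under q_{t+1}(·|ω^t) (the intersection of all closed sets A ⊂ ℝ^d with q_{t+1}(ΔS_{t+1}(ω^t,·) ∈ A | ω^t) = 1) and D^{t+1}(ω^t) := Aff(D̃^{t+1}(ω^t)), the affine hull of D̃^{t+1}(ω^t). Then D̃^{t+1} and D^{t+1} are nonempty, closed-valued and ℱ_t-measurable random sets (i.e., for every open O ⊂ ℝ^d the set {ω^t : D̃^{t+1}(ω^t) ∩ O ≠ ∅} belongs to ℱ_t, and likewise for D^{t+1}); in particular Graph(D^{t+1}) := {(ω^t, h) ∈ Ω^t × ℝ^d : h ∈ D^{t+1}(ω^t)} belongs to ℱ_t ⊗ ℬ(ℝ^d). -/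
/-! The support `D̃(ω)` of the conditional law meets an open set `O` exactly when `O` has positive
conditional mass (`suppK_inter_nonempty_iff`; one direction is the Lindelöf property of `ℝ^d`), and
that mass is a measurable function of `ω` because `q` is a kernel. Taking `O = univ` gives
nonemptiness.

For the affine hull no measurable selection is needed. A point of the affine hull of a set `F` has
the form `x₀ + ∑ rᵢ (xᵢ - x₀)` with points `x₀, …, xₙ` of `F`. If it lies in the open set `O`, then
by density the `rᵢ` may be taken rational, and by continuity the whole product of small basic
neighbourhoods `Bᵢ` of the `xᵢ` is mapped into `O`. Hence `aff F` meets `O` iff for some `n`, some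
rational coefficients and some basic open sets `B₀, …, Bₙ` whose product is mapped into `O`, the set
`F` meets every `Bᵢ` (`affineSpan_inter_nonempty_iff`). This is a countable union of finite
intersections of events `{F ∩ Bᵢ ≠ ∅}`.

Finally, the complement of the graph of a closed-valued measurable random set is the countable union
over basic open sets `B` of the rectangles `{F ∩ B = ∅} × B` (`measurableSet_graph_of_isClosed`). -/

open MeasureTheory ProbabilityTheory Set
open scoped ENNReal InnerProductSpace

noncomputable section

variable {Ωs : ℕ → Type} [∀ t, MeasurableSpace (Ωs t)] {d : ℕ}

/-- The price increment `ΔS_{t+1}(ω^t, ω_{t+1}) = S_{t+1}(ω^t,ω_{t+1}) − S_t(ω^t)`. -/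
def deltaS (S : ∀ t, Hist Ωs t → Evec d) (t : ℕ) (ω : Hist Ωs t) (y : Ωs (t + 1)) : Evec d :=
  S (t + 1) ((ω, y) : Hist Ωs (t + 1)) - S t ω

/-- `D̃^{t+1}(ω^t)`: the support of the law of `ΔS_{t+1}(ω^t, ·)` under `q_{t+1}(·|ω^t)`,
i.e. the intersection of all closed sets carrying full conditional measure. -/
def suppK (q : ∀ t, Kernel (Hist Ωs t) (Ωs (t + 1))) (S : ∀ t, Hist Ωs t → Evec d)
    (t : ℕ) (ω : Hist Ωs t) : Set (Evec d) :=
  ⋂₀ {A : Set (Evec d) | IsClosed A ∧ (q t) ω {y | deltaS S t ω y ∈ A} = 1}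

/-- `D^{t+1}(ω^t)`: the affine hull of the support `D̃^{t+1}(ω^t)`. -/
def Dset (q : ∀ t, Kernel (Hist Ωs t) (Ωs (t + 1))) (S : ∀ t, Hist Ωs t → Evec d)
    (t : ℕ) (ω : Hist Ωs t) : Set (Evec d) :=
  (affineSpan ℝ (suppK q S t ω) : Set (Evec d))

open TopologicalSpace

section RandomSets

variable {E : Type*} [NormedAddCommGroup E] [NormedSpace ℝ E]

/-- The affine combination of `y 0, …, y n` in which `y i.succ` has weight `c i` and `y 0` has the
complementary weight `1 - ∑ c i`. -/
def affComb {n : ℕ} (c : Fin n → ℝ) (y : Fin (n + 1) → E) : E :=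
  y 0 + ∑ i, c i • (y i.succ - y 0)

lemma affComb_mem_affineSpan {n : ℕ} (c : Fin n → ℝ) (y : Fin (n + 1) → E) {F : Set E}
    (hy : ∀ i, y i ∈ F) : affComb c y ∈ affineSpan ℝ F := by
  have h : (∑ i, c i • (y i.succ - y 0)) ∈ (affineSpan ℝ F).direction :=
    Submodule.sum_mem _ fun i _ => Submodule.smul_mem _ _
      (AffineSubspace.vsub_mem_direction (subset_affineSpan ℝ F (hy _))
        (subset_affineSpan ℝ F (hy 0)))
  have := AffineSubspace.vadd_mem_of_mem_direction h (subset_affineSpan ℝ F (hy 0))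
  rwa [vadd_eq_add, add_comm] at this

lemma exists_affComb_eq {F : Set E} {p : E} (hp : p ∈ affineSpan ℝ F) :
    ∃ (n : ℕ) (c : Fin n → ℝ) (y : Fin (n + 1) → E), (∀ i, y i ∈ F) ∧ affComb c y = p := by
  obtain ⟨x₀, hx₀⟩ : F.Nonempty := (affineSpan_nonempty ℝ).1 ⟨p, hp⟩
  have h1 : p - x₀ ∈ vectorSpan ℝ F := by
    rw [← direction_affineSpan]
    exact AffineSubspace.vsub_mem_direction hp (subset_affineSpan ℝ F hx₀)
  rw [vectorSpan_eq_span_vsub_set_right ℝ hx₀, Submodule.mem_span_set'] at h1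
  obtain ⟨n, c, g, hg⟩ := h1
  choose x hx hxg using fun i => (g i).2
  refine ⟨n, c, Fin.cons x₀ x, fun i => ?_, ?_⟩
  · refine Fin.cases ?_ (fun j => ?_) i
    · simpa using hx₀
    · simpa using hx j
  · simp only [affComb, Fin.cons_zero, Fin.cons_succ]
    have : ∀ i, x i - x₀ = (g i : E) := hxg
    simp only [this, hg]
    abel

/-- Hitting an open set by the affine hull is a countable combination of hitting basic open sets by
the set itself. -/
lemma affineSpan_inter_nonempty_iff [SecondCountableTopology E] (F : Set E) {O : Set E}
    (hO : IsOpen O) :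
    ((affineSpan ℝ F : Set E) ∩ O).Nonempty ↔
      ∃ (n : ℕ) (r : Fin n → ℚ) (B : Fin (n + 1) → countableBasis E),
        (∀ y : Fin (n + 1) → E, (∀ i, y i ∈ (B i : Set E)) →
          affComb (fun i => (r i : ℝ)) y ∈ O) ∧
        ∀ i, (F ∩ B i).Nonempty := by
  constructor
  · rintro ⟨p, hp, hpO⟩
    obtain ⟨n, c, y, hy, rfl⟩ := exists_affComb_eq hp
    -- perturb the coefficients to rational ones
    have hdense : DenseRange (fun (r : Fin n → ℚ) (i : Fin n) => (r i : ℝ)) :=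
      DenseRange.piMap (fun _ => Rat.denseRange_cast)
    have hc : Continuous fun c : Fin n → ℝ => affComb c y := by
      unfold affComb; fun_prop
    obtain ⟨r, hr⟩ := hdense.exists_mem_open (hO.preimage hc) ⟨c, hpO⟩
    -- and fatten the points to basic neighbourhoods
    have hc' : Continuous fun y : Fin (n + 1) → E => affComb (fun i => (r i : ℝ)) y := by
      unfold affComb; fun_prop
    obtain ⟨u, hu, hsub⟩ := isOpen_pi_iff'.1 (hO.preimage hc') y hr
    choose B hB hyB hBu using fun i =>
      (isBasis_countableBasis E).exists_subset_of_mem_open (hu i).2 (hu i).1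
    exact ⟨n, r, fun i => ⟨B i, hB i⟩,
      fun z hz => hsub fun i _ => hBu i (hz i), fun i => ⟨y i, hy i, hyB i⟩⟩
  · rintro ⟨n, r, B, hB, hF⟩
    choose y hyF hyB using hF
    exact ⟨_, affComb_mem_affineSpan _ y hyF, hB y hyB⟩

variable {α : Type*} [MeasurableSpace α]

lemma measurableSet_affineSpan_inter_nonempty [SecondCountableTopology E] {F : α → Set E}
    (hF : ∀ O, IsOpen O → MeasurableSet {a | (F a ∩ O).Nonempty}) {O : Set E} (hO : IsOpen O) :
    MeasurableSet {a | ((affineSpan ℝ (F a) : Set E) ∩ O).Nonempty} := by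
  have : Countable (countableBasis E) := (countable_countableBasis E).to_subtype
  simp only [affineSpan_inter_nonempty_iff _ hO]
  simp only [ofPred_exists]
  refine MeasurableSet.iUnion fun n => MeasurableSet.iUnion fun r =>
    MeasurableSet.iUnion fun B => ?_
  have hi : MeasurableSet {a | ∀ i, (F a ∩ B i).Nonempty} := by
    rw [ofPred_forall]
    exact MeasurableSet.iInter fun i => hF _ (isOpen_of_mem_countableBasis (B i).2)
  exact (MeasurableSet.const _).inter hi

/-- A closed-valued measurable random set has a measurable graph. -/
lemma measurableSet_graph_of_isClosed {X : Type*} [TopologicalSpace X] [SecondCountableTopology X]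
    [MeasurableSpace X] [OpensMeasurableSpace X] {F : α → Set X} (hcl : ∀ a, IsClosed (F a))
    (hF : ∀ O, IsOpen O → MeasurableSet {a | (F a ∩ O).Nonempty}) :
    MeasurableSet {p : α × X | p.2 ∈ F p.1} := by
  have key : {p : α × X | p.2 ∈ F p.1}ᶜ =
      ⋃ B ∈ countableBasis X, {a | (F a ∩ B).Nonempty}ᶜ ×ˢ B := by
    ext ⟨a, x⟩
    simp only [mem_compl_iff, mem_ofPred_eq, mem_iUnion, mem_prod, exists_prop]
    constructor
    · intro hx
      obtain ⟨B, hB, hxB, hBF⟩ :=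
        (isBasis_countableBasis X).exists_subset_of_mem_open (show x ∈ (F a)ᶜ from hx)
          (hcl a).isOpen_compl
      exact ⟨B, hB, fun ⟨z, hz, hzB⟩ => hBF hzB hz, hxB⟩
    · rintro ⟨B, -, hne, hxB⟩ hx
      exact hne ⟨x, hx, hxB⟩
  refine MeasurableSet.of_compl ?_
  rw [key]
  refine MeasurableSet.biUnion (countable_countableBasis X) fun B hB => ?_
  have hBo := isOpen_of_mem_countableBasis hB
  exact (hF B hBo).compl.prod hBo.measurableSet

end RandomSets

lemma measurable_deltaS {S : ∀ t, Hist Ωs t → Evec d} (hS : ∀ t, Measurable (S t)) (t : ℕ) :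
    Measurable fun p : Hist Ωs t × Ωs (t + 1) => deltaS S t p.1 p.2 :=
  (show Measurable fun p : Hist Ωs t × Ωs (t + 1) => S (t + 1) p from hS (t + 1)).sub
    ((hS t).comp measurable_fst)

/-- The conditional support meets an open set iff that set has positive conditional mass. -/
lemma suppK_inter_nonempty_iff (q : ∀ t, Kernel (Hist Ωs t) (Ωs (t + 1)))
    [∀ t, IsMarkovKernel (q t)] {S : ∀ t, Hist Ωs t → Evec d} (hS : ∀ t, Measurable (S t))
    (t : ℕ) (ω : Hist Ωs t) {O : Set (Evec d)} (hO : IsOpen O) :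
    (suppK q S t ω ∩ O).Nonempty ↔ q t ω {y | deltaS S t ω y ∈ O} ≠ 0 := by
  have hm : Measurable (deltaS S t ω) := (measurable_deltaS hS t).comp measurable_prodMk_left
  constructor
  · rintro ⟨x, hx, hxO⟩ h0
    refine hx Oᶜ ⟨hO.isClosed_compl, ?_⟩ hxO
    exact (prob_compl_eq_one_iff (hm hO.measurableSet)).2 h0
  · intro h
    by_contra hne
    apply h
    change q t ω (deltaS S t ω ⁻¹' O) = 0
    rw [← Measure.map_apply hm hO.measurableSet]
    -- each point of `O` has a null neighbourhood, so `O` is null by the Lindelöf property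
    refine measure_null_of_locally_null O fun x hxO => ?_
    have hx : x ∉ suppK q S t ω := fun hx => hne ⟨x, hx, hxO⟩
    simp only [suppK, mem_sInter, not_forall] at hx
    obtain ⟨A, ⟨hA, hA1⟩, hxA⟩ := hx
    refine ⟨Aᶜ, mem_nhdsWithin_of_mem_nhds (hA.isOpen_compl.mem_nhds hxA), ?_⟩
    rw [Measure.map_apply hm hA.isOpen_compl.measurableSet]
    exact (prob_compl_eq_zero_iff (hm hA.measurableSet)).2 hA1

/-- For `0 ≤ t ≤ T−1`, the random sets `D̃^{t+1}` (conditional support)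
and `D^{t+1}` (its affine hull) are nonempty, closed-valued and `ℱ_t`-measurable
random sets; in particular `Graph(D^{t+1}) ∈ ℱ_t ⊗ ℬ(ℝ^d)`. -/
theorem support_and_affineHull_measurable_random_sets
    (q : ∀ t, Kernel (Hist Ωs t) (Ωs (t + 1))) [∀ t, IsMarkovKernel (q t)]
    (S : ∀ t, Hist Ωs t → Evec d) (hS : ∀ t, Measurable (S t))
    (T t : ℕ) (ht : t + 1 ≤ T) :
    (∀ ω : Hist Ωs t, (suppK q S t ω).Nonempty ∧ IsClosed (suppK q S t ω) ∧
      (Dset q S t ω).Nonempty ∧ IsClosed (Dset q S t ω)) ∧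
    (∀ O : Set (Evec d), IsOpen O →
      MeasurableSet[histMS Ωs t] {ω | (suppK q S t ω ∩ O).Nonempty} ∧
      MeasurableSet[histMS Ωs t] {ω | (Dset q S t ω ∩ O).Nonempty}) ∧
    MeasurableSet {p : Hist Ωs t × Evec d | p.2 ∈ Dset q S t p.1} := by
  have hmeas : ∀ O : Set (Evec d), IsOpen O →
      MeasurableSet {ω : Hist Ωs t | (suppK q S t ω ∩ O).Nonempty} := fun O hO => by
    simp only [suppK_inter_nonempty_iff q hS t _ hO]
    have := Kernel.measurable_kernel_prodMk_left (κ := q t)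
      (measurable_deltaS hS t hO.measurableSet)
    exact (this (measurableSet_singleton 0)).compl
  have hmeasD : ∀ O : Set (Evec d), IsOpen O →
      MeasurableSet {ω : Hist Ωs t | (Dset q S t ω ∩ O).Nonempty} := fun O hO =>
    measurableSet_affineSpan_inter_nonempty hmeas hO
  have hne : ∀ ω : Hist Ωs t, (suppK q S t ω).Nonempty := fun ω => by
    have := (suppK_inter_nonempty_iff q hS t ω isOpen_univ).2 (by simp)
    simpa using this
  have hclD : ∀ ω : Hist Ωs t, IsClosed (Dset q S t ω) := fun ω =>
    AffineSubspace.closed_of_finiteDimensional _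
  exact ⟨fun ω => ⟨hne ω, isClosed_sInter fun A hA => hA.1, (affineSpan_nonempty ℝ).2 (hne ω),
    hclD ω⟩, fun O hO => ⟨hmeas O hO, hmeasD O hO⟩, measurableSet_graph_of_isClosed hclD hmeasD⟩
end
end

section
/- Assume the (NA) condition and let 0 ≤ t ≤ T−1. Then there exist Ω^t_{NA} ∈ ℱ_t with P_t(Ω^t_{NA}) = 1 and an ℱ_t-measurable function α_t : Ω^t → (0,1] such that for every ω^t ∈ Ω^t_{NA} and every h ∈ D^{t+1}(ω^t): q_{t+1}( h·ΔS_{t+1}(ω^t,·) ≤ −α_t(ω^t)·|h| | ω^t ) ≥ α_t(ω^t); moreover Ω^t_{NA} can be chosen so that D^{t+1}(ω^t) is a vector subspace of ℝ^d for all ω^t ∈ Ω^t_{NA}. -/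
/-!
Only one period matters. Applying (NA) to strategies that trade over `(t, t+1]` alone gives a
one-period statement for the kernel `κ ω`, the conditional law of `ΔS_{t+1}(ω, ·)`: if a measurable
`φ` satisfies `φ(ω)·x ≥ 0` for `κ ω`-almost every `x`, for almost every `ω`, then `φ(ω)·x = 0` in
the same sense (`ae_Vval_onePeriod_iff`). The one-period theorem is `local_quantitative`.

Let `G(ω, h)` be the `κ ω`-integral of `max 0 (-h·x) / (1 + ‖x‖)` (`shortfall`), continuous and
positively homogeneous in `h`. The set `C(ω) = {G(ω, ·) = 0}` is the closed convex cone of positions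
without loss. The projection onto `C(ω)` of a fixed vector is measurable in `ω`
(`exists_measurable_proj`), hence an admissible `φ`. Projecting a dense sequence of vectors shows
that, for almost every `ω`, all positions in `C(ω)` have zero gain: there is no arbitrage pointwise.

Let `M(ω)` be the second moment operator of `x / (1 + ‖x‖)` (`momentMap`). Its range contains the
affine hull of the support. Where there is no pointwise arbitrage, compactness of the unit sphere of
the range gives `‖M v‖ ≤ (n + 1) G(M v)` for all `v` and some `n` (`exists_bound_of_pointwise_NA`).
By density it suffices to test countably many `v`, so the set `A` where some `n` works and the least
such `n` are measurable. On `A` the affine hull contains `0` (`zero_mem_affineSpan_support`), and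
splitting the integral `G(h)` gives the claim with `α = 1 / (2(n + 1))` (`le_measure_of_bound`).
-/


open MeasureTheory ProbabilityTheory Set
open scoped ENNReal InnerProductSpace

noncomputable section

variable {Ωs : ℕ → Type} [∀ t, MeasurableSpace (Ωs t)] {d : ℕ}

/-- The wealth process `V_t^{x,φ} = x + Σ_{s=1}^t φ_s · ΔS_s` (here `φ t` is the paper's
`φ_{t+1}`, the holding over the period `(t, t+1]`). -/
def Vval (S : ∀ t, Hist Ωs t → Evec d) (φ : ∀ t, Hist Ωs t → Evec d) (x : ℝ) :
    ∀ t, Hist Ωs t → ℝ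
  | 0 => fun _ => x
  | t + 1 => fun ω => Vval S φ x t ω.1 + ⟪φ t ω.1, deltaS S t ω.1 ω.2⟫_ℝ

/-- The no-arbitrage condition (NA): if `V_T^{0,φ} ≥ 0` `P`-a.s. for a (predictable)
strategy `φ`, then `V_T^{0,φ} = 0` `P`-a.s. -/
def NAcond (q : ∀ t, Kernel (Hist Ωs t) (Ωs (t + 1))) (S : ∀ t, Hist Ωs t → Evec d)
    (T : ℕ) : Prop :=
  ∀ φ : ∀ t, Hist Ωs t → Evec d, (∀ t, Measurable (φ t)) →
    (∀ᵐ ω ∂(Pmes q T), 0 ≤ Vval S φ 0 T ω) → (∀ᵐ ω ∂(Pmes q T), Vval S φ 0 T ω = 0)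

/-! ### A measurable projection -/

section Abstract

open Filter Topology

/-- The metric projection of a fixed point `v` onto the random closed convex set
`{h | G ω h = 0}` is measurable in `ω`. It is the pointwise limit of `u n ω`, the first point of a
dense sequence that minimises `‖v - h‖ + n * G ω h` up to `1 / (n + 1)`; by compactness and
uniqueness of the projection the whole sequence `u n ω` converges. -/
lemma exists_measurable_proj {X : Type*} [MeasurableSpace X] {E : Type*}
    [NormedAddCommGroup E] [InnerProductSpace ℝ E] [FiniteDimensional ℝ E]
    [MeasurableSpace E] [BorelSpace E]
    (G : X → E → ℝ) (hGm : ∀ h, Measurable fun ω => G ω h) (hGc : ∀ ω, Continuous (G ω))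
    (hG0 : ∀ ω h, 0 ≤ G ω h) (hconv : ∀ ω, Convex ℝ {h | G ω h = 0})
    (hne : ∀ ω, ∃ h, G ω h = 0) (v : E) :
    ∃ p : X → E, Measurable p ∧ ∀ ω, G ω (p ω) = 0 ∧
      ∀ c, G ω c = 0 → ‖v - p ω‖ ≤ ‖v - c‖ := by
  classical
  set e : ℕ → E := TopologicalSpace.denseSeq E with he
  have hdense : DenseRange e := TopologicalSpace.denseRange_denseSeq E
  set F : ℕ → X → E → ℝ := fun n ω h => ‖v - h‖ + n * G ω h with hF
  have hF0 : ∀ n ω h, 0 ≤ F n ω h := fun n ω h =>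
    add_nonneg (norm_nonneg _) (mul_nonneg (Nat.cast_nonneg _) (hG0 _ _))
  have hFc : ∀ n ω, Continuous (F n ω) := fun n ω => by
    have := hGc ω
    simp only [hF]; fun_prop
  have hFm : ∀ n h, Measurable fun ω => F n ω h := fun n h => by
    have := hGm h
    simp only [hF]; fun_prop
  have hex : ∀ (n : ℕ) (ω : X), ∃ k, ∀ j, F n ω (e k) ≤ F n ω (e j) + 1 / ((n : ℝ) + 1) := by
    intro n ω
    have hb : BddBelow (range fun k => F n ω (e k)) := ⟨0, by rintro _ ⟨k, rfl⟩; exact hF0 _ _ _⟩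
    obtain ⟨k, hk⟩ := exists_lt_of_ciInf_lt
      (show (⨅ k, F n ω (e k)) < (⨅ k, F n ω (e k)) + 1 / ((n : ℝ) + 1) by
        have : (0 : ℝ) < 1 / ((n : ℝ) + 1) := by positivity
        linarith)
    refine ⟨k, fun j => ?_⟩
    have := ciInf_le hb j
    linarith
  let u : ℕ → X → E := fun n ω => e (Nat.find (hex n ω))
  have hum : ∀ n, Measurable (u n) := by
    intro n
    refine (measurable_from_nat (f := e)).comp (measurable_find (hex n) fun k => ?_)
    rw [show {x | ∀ j, F n x (e k) ≤ F n x (e j) + 1 / ((n : ℝ) + 1)} =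
      ⋂ j, {x | F n x (e k) ≤ F n x (e j) + 1 / ((n : ℝ) + 1)} by ext; simp]
    exact MeasurableSet.iInter fun j =>
      measurableSet_le (hFm n _) ((hFm n _).add_const _)
  -- near-minimality extends from the dense sequence to all points by continuity
  have hu : ∀ n ω h, F n ω (u n ω) ≤ F n ω h + 1 / ((n : ℝ) + 1) := by
    intro n ω h
    have hcl : IsClosed {h | F n ω (u n ω) ≤ F n ω h + 1 / ((n : ℝ) + 1)} :=
      isClosed_le continuous_const ((hFc n ω).add continuous_const)
    exact hdense.induction_on (p := fun h => F n ω (u n ω) ≤ F n ω h + 1 / ((n : ℝ) + 1)) h hcl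
      (Nat.find_spec (hex n ω))
  have hproj : ∀ ω, ∃ p, G ω p = 0 ∧ ∀ c, G ω c = 0 → inner ℝ (v - p) (c - p) ≤ 0 := by
    intro ω
    have hK : IsClosed {h | G ω h = 0} := isClosed_eq (hGc ω) continuous_const
    obtain ⟨p, hp, hmin⟩ := exists_norm_eq_iInf_of_complete_convex (hne ω) hK.isComplete
      (hconv ω) v
    exact ⟨p, hp, (norm_eq_iInf_iff_real_inner_le_zero (hconv ω) hp).1 hmin⟩
  choose p hp0 hpin using hproj
  -- Pythagorean inequality at the projection; it gives both minimality and uniqueness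
  have hpy : ∀ ω c, G ω c = 0 → ‖v - p ω‖ ^ 2 + ‖p ω - c‖ ^ 2 ≤ ‖v - c‖ ^ 2 := by
    intro ω c hc
    have h1 := hpin ω c hc
    have h2 : v - c = (v - p ω) - (c - p ω) := by abel
    have h3 := norm_sub_sq_real (v - p ω) (c - p ω)
    rw [h2, h3, norm_sub_rev (p ω) c]
    linarith
  have hpd : ∀ ω c, G ω c = 0 → ‖v - p ω‖ ≤ ‖v - c‖ := by
    intro ω c hc
    have h1 := hpy ω c hc
    exact le_of_sq_le_sq (by nlinarith [sq_nonneg ‖p ω - c‖]) (norm_nonneg _)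
  refine ⟨p, measurable_of_tendsto_metrizable hum (tendsto_pi_nhds.2 fun ω => ?_),
    fun ω => ⟨hp0 ω, hpd ω⟩⟩
  have hkey : ∀ n, ‖v - u n ω‖ + n * G ω (u n ω) ≤ ‖v - p ω‖ + 1 / ((n : ℝ) + 1) := by
    intro n
    have := hu n ω (p ω)
    simpa [hF, hp0 ω] using this
  have hone : ∀ n : ℕ, 1 / ((n : ℝ) + 1) ≤ 1 := fun n => by
    rw [div_le_one (by positivity)]; linarith [(Nat.cast_nonneg n : (0 : ℝ) ≤ n)]
  have hdist : ∀ n, ‖v - u n ω‖ ≤ ‖v - p ω‖ + 1 / ((n : ℝ) + 1) := fun n => by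
    have := hkey n
    have := mul_nonneg (Nat.cast_nonneg (α := ℝ) n) (hG0 ω (u n ω))
    linarith
  have hGu : ∀ n : ℕ, G ω (u (n + 1) ω) ≤ (‖v - p ω‖ + 1) * (1 / ((n : ℝ) + 1)) := fun n => by
    have h1 := hkey (n + 1)
    have h2 := hone (n + 1)
    have h3 := norm_nonneg (v - u (n + 1) ω)
    rw [mul_one_div, le_div_iff₀ (by positivity)]
    push_cast at h1 h2
    linarith
  have hGt : Tendsto (fun n => G ω (u n ω)) atTop (𝓝 0) := by
    rw [← tendsto_add_atTop_iff_nat 1]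
    refine squeeze_zero (fun n => hG0 _ _) hGu ?_
    simpa using (tendsto_one_div_add_atTop_nhds_zero_nat (𝕜 := ℝ)).const_mul (‖v - p ω‖ + 1)
  refine (isCompact_closedBall v (‖v - p ω‖ + 1)).tendsto_nhds_of_unique_mapClusterPt
    (Eventually.of_forall fun n => ?_) fun x _ hx => ?_
  · rw [Metric.mem_closedBall, dist_comm, dist_eq_norm]
    exact (hdist n).trans (by linarith [hone n])
  · obtain ⟨ψ, hψ, hlim⟩ := MapClusterPt.tendsto_subseq hx
    have hGx : G ω x = 0 :=
      tendsto_nhds_unique (((hGc ω).tendsto x).comp hlim) (hGt.comp hψ.tendsto_atTop)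
    have hdx : ‖v - x‖ ≤ ‖v - p ω‖ := by
      have hr : Tendsto (fun n : ℕ => ‖v - p ω‖ + 1 / ((n : ℝ) + 1)) atTop (𝓝 ‖v - p ω‖) := by
        simpa using (tendsto_one_div_add_atTop_nhds_zero_nat (𝕜 := ℝ)).const_add ‖v - p ω‖
      exact le_of_tendsto_of_tendsto' ((tendsto_const_nhds.sub hlim).norm)
        (hr.comp hψ.tendsto_atTop) fun n => hdist _
    have h1 := hpy ω x hGx
    have h2 : ‖p ω - x‖ ^ 2 ≤ 0 := by nlinarith [norm_nonneg (v - x)]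
    have h3 : ‖p ω - x‖ = 0 := by nlinarith [norm_nonneg (p ω - x)]
    exact (sub_eq_zero.1 (norm_eq_zero.1 h3)).symm

/-! ### One-period markets under a single law -/

/-- The rescaling `x ↦ x / (1 + ‖x‖)`. It is bounded by `1` and keeps the sign of every inner
product, so that all integrals below exist without any moment assumption. -/
def squash (x : Evec d) : Evec d := (1 + ‖x‖)⁻¹ • x

lemma continuous_squash : Continuous (squash : Evec d → Evec d) := by
  unfold squash
  have h : Continuous fun x : Evec d => 1 + ‖x‖ := by fun_prop
  exact (h.inv₀ fun x => by positivity).smul continuous_id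

lemma norm_squash_le (x : Evec d) : ‖squash x‖ ≤ 1 := by
  rw [squash, norm_smul, norm_inv, Real.norm_of_nonneg (by positivity : 0 ≤ 1 + ‖x‖),
    inv_mul_le_iff₀ (by positivity)]
  linarith

lemma inner_squash (h x : Evec d) : ⟪h, squash x⟫_ℝ = (1 + ‖x‖)⁻¹ * ⟪h, x⟫_ℝ := by
  rw [squash, inner_smul_right]

lemma abs_inner_squash_le (h x : Evec d) : |⟪h, squash x⟫_ℝ| ≤ ‖h‖ :=
  (abs_real_inner_le_norm _ _).trans
    (mul_le_of_le_one_right (norm_nonneg _) (norm_squash_le x))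

/-- The expected rescaled loss `∫ max 0 (-h·x) / (1 + ‖x‖) dν(x)` of the position `h`. It is
continuous and positively homogeneous in `h`, and vanishes iff `h·x ≥ 0` almost surely. -/
def shortfall (ν : Measure (Evec d)) (h : Evec d) : ℝ :=
  ∫ x, max 0 (-⟪h, squash x⟫_ℝ) ∂ν

lemma continuous_shortfall_integrand (h : Evec d) :
    Continuous fun x : Evec d => max 0 (-⟪h, squash x⟫_ℝ) := by
  have := continuous_squash (d := d)
  fun_prop

lemma shortfall_integrand_le (h x : Evec d) : max 0 (-⟪h, squash x⟫_ℝ) ≤ ‖h‖ :=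
  max_le (norm_nonneg _) ((neg_le_abs _).trans (abs_inner_squash_le h x))

lemma shortfall_nonneg (ν : Measure (Evec d)) (h : Evec d) : 0 ≤ shortfall ν h :=
  integral_nonneg fun _ => le_max_left _ _

lemma shortfall_smul (ν : Measure (Evec d)) {r : ℝ} (hr : 0 ≤ r) (h : Evec d) :
    shortfall ν (r • h) = r * shortfall ν h := by
  rw [shortfall, shortfall, ← integral_const_mul]
  refine integral_congr_ae (Eventually.of_forall fun x => ?_)
  simp only [real_inner_smul_left]
  rw [mul_max_of_nonneg _ _ hr]
  simp

section OneMeasure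

variable (ν : Measure (Evec d)) [IsProbabilityMeasure ν]

lemma integrable_shortfall (h : Evec d) : Integrable (fun x => max 0 (-⟪h, squash x⟫_ℝ)) ν :=
  Integrable.of_bound (continuous_shortfall_integrand h).aestronglyMeasurable ‖h‖
    (Eventually.of_forall fun x => by
      rw [Real.norm_of_nonneg (le_max_left _ _)]; exact shortfall_integrand_le h x)

lemma integrable_moment (v : Evec d) : Integrable (fun x => ⟪v, squash x⟫_ℝ • squash x) ν := by
  have hc := continuous_squash (d := d)
  refine Integrable.of_bound (Continuous.aestronglyMeasurable (by fun_prop)) ‖v‖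
    (Eventually.of_forall fun x => ?_)
  rw [norm_smul]
  exact (mul_le_of_le_one_right (norm_nonneg _) (norm_squash_le x)).trans
    (abs_inner_squash_le v x)

lemma continuous_shortfall : Continuous (shortfall ν) := by
  refine (LipschitzWith.of_le_add (f := shortfall ν) fun h k => ?_).continuous
  have hint := (integrable_shortfall ν k).add (integrable_const (μ := ν) (dist h k))
  calc shortfall ν h ≤ ∫ x, (max 0 (-⟪k, squash x⟫_ℝ) + dist h k) ∂ν := by
        refine integral_mono (integrable_shortfall ν h) hint fun x => ?_
        have h1 := (abs_le.1 (abs_inner_squash_le (h - k) x)).1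
        rw [inner_sub_left, ← dist_eq_norm] at h1
        refine max_le (add_nonneg (le_max_left _ _) dist_nonneg) ?_
        linarith [le_max_right 0 (-⟪k, squash x⟫_ℝ)]
    _ = shortfall ν k + dist h k := by
        rw [integral_add (integrable_shortfall ν k) (integrable_const _)]
        simp [shortfall]

lemma shortfall_eq_zero_iff (h : Evec d) : shortfall ν h = 0 ↔ ∀ᵐ x ∂ν, 0 ≤ ⟪h, x⟫_ℝ := by
  rw [shortfall, integral_eq_zero_iff_of_nonneg (fun _ => by exact le_max_left _ _)
    (integrable_shortfall ν h)]
  refine eventually_congr (Eventually.of_forall fun x => ?_)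
  have hpos : 0 < (1 + ‖x‖)⁻¹ := by positivity
  simp only [Pi.zero_apply, max_eq_left_iff, inner_squash, neg_nonpos,
    mul_nonneg_iff_of_pos_left hpos]

lemma convex_shortfall_zero : Convex ℝ {h | shortfall ν h = 0} := by
  intro h hh k hk a b ha hb _
  simp only [mem_ofPred_eq, shortfall_eq_zero_iff] at hh hk ⊢
  filter_upwards [hh, hk] with x h1 h2
  rw [inner_add_left, real_inner_smul_left, real_inner_smul_left]
  positivity

/-- The second moment operator `v ↦ ∫ (v·u) u dν(x)`, `u = squash x`. Its range contains almost
every `x`, hence the affine hull of the support, and so it parametrises that random subspace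
linearly by the fixed space `ℝ^d`. -/
def momentMap : Evec d →ₗ[ℝ] Evec d where
  toFun v := ∫ x, ⟪v, squash x⟫_ℝ • squash x ∂ν
  map_add' v w := by
    rw [← integral_add (integrable_moment ν v) (integrable_moment ν w)]
    simp only [inner_add_left, add_smul]
  map_smul' r v := by
    rw [RingHom.id_apply, ← integral_smul]
    simp only [real_inner_smul_left, mul_smul]

lemma inner_momentMap (h v : Evec d) :
    ⟪h, momentMap ν v⟫_ℝ = ∫ x, ⟪v, squash x⟫_ℝ * ⟪h, squash x⟫_ℝ ∂ν := by
  have := integral_inner (𝕜 := ℝ) (integrable_moment ν v) h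
  simp only [inner_smul_right] at this
  exact this.symm

/-- If `v` is orthogonal to the range of the moment map, then `0 = ⟪v, momentMap ν v⟫` is the
integral of `⟪v, squash x⟫²`, so `v ⊥ x` almost surely. -/
lemma ae_mem_range_momentMap : ∀ᵐ x ∂ν, x ∈ LinearMap.range (momentMap ν) := by
  set W := LinearMap.range (momentMap ν) with hW
  have hW0 : ∀ v ∈ Wᗮ, ∀ᵐ x ∂ν, ⟪x, v⟫_ℝ = 0 := by
    intro v hv
    have h0 : ∫ x, ⟪v, squash x⟫_ℝ * ⟪v, squash x⟫_ℝ ∂ν = 0 := by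
      rw [← inner_momentMap, real_inner_comm]
      exact hv _ (LinearMap.mem_range_self _ v)
    have hc := continuous_squash (d := d)
    rw [integral_eq_zero_iff_of_nonneg (fun x => mul_self_nonneg _)] at h0
    · filter_upwards [h0] with x hx
      have hx1 : ⟪v, squash x⟫_ℝ = 0 := mul_self_eq_zero.1 hx
      rw [inner_squash] at hx1
      have hpos : (1 + ‖x‖)⁻¹ ≠ 0 := by positivity
      rw [real_inner_comm]
      exact (mul_eq_zero.1 hx1).resolve_left hpos
    · have hi : Continuous fun x : Evec d => ⟪v, squash x⟫_ℝ := by fun_prop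
      refine Integrable.of_bound (hi.mul hi).aestronglyMeasurable (‖v‖ * ‖v‖)
        (Eventually.of_forall fun x => ?_)
      rw [norm_mul]
      exact mul_le_mul (abs_inner_squash_le v x) (abs_inner_squash_le v x) (norm_nonneg _)
        (norm_nonneg _)
  have hall : ∀ᵐ x ∂ν, ∀ n, ⟪x, (TopologicalSpace.denseSeq Wᗮ n : Evec d)⟫_ℝ = 0 :=
    ae_all_iff.2 fun n => hW0 _ (TopologicalSpace.denseSeq Wᗮ n).2
  filter_upwards [hall] with x hx
  rw [← Submodule.orthogonal_orthogonal W, Submodule.mem_orthogonal']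
  intro w hw
  exact (TopologicalSpace.denseRange_denseSeq Wᗮ).induction_on
    (p := fun w : Wᗮ => ⟪x, (w : Evec d)⟫_ℝ = 0) ⟨w, hw⟩
    (isClosed_eq (by fun_prop) continuous_const) hx

/-- If the law admits no arbitrage, the shortfall is positive on the unit sphere of the range of the
moment map, hence bounded below there by compactness. -/
lemma exists_bound_of_pointwise_NA
    (hna : ∀ h, shortfall ν h = 0 → shortfall ν (-h) = 0) :
    ∃ n : ℕ, ∀ v, ‖momentMap ν v‖ ≤ ((n : ℝ) + 1) * shortfall ν (momentMap ν v) := by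
  set W := LinearMap.range (momentMap ν) with hW
  have hpos : ∀ h ∈ W, h ≠ 0 → 0 < shortfall ν h := by
    intro h hh hne
    refine (shortfall_nonneg ν h).lt_of_ne fun h0 => hne ?_
    have h1 := (shortfall_eq_zero_iff ν h).1 h0.symm
    have h2 := (shortfall_eq_zero_iff ν (-h)).1 (hna h h0.symm)
    obtain ⟨v, rfl⟩ := hh
    rw [← inner_self_eq_zero (𝕜 := ℝ), inner_momentMap]
    refine integral_eq_zero_of_ae ?_
    filter_upwards [h1, h2] with x hx1 hx2
    rw [inner_neg_left] at hx2
    rw [inner_squash (momentMap ν v), le_antisymm (by linarith) hx1]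
    simp
  have hK : IsCompact ((W : Set (Evec d)) ∩ Metric.sphere 0 1) :=
    (isCompact_sphere 0 1).inter_left W.closed_of_finiteDimensional
  obtain ⟨c, hc, hcb⟩ : ∃ c : ℝ, 0 < c ∧
      ∀ h ∈ (W : Set (Evec d)) ∩ Metric.sphere 0 1, c ≤ shortfall ν h := by
    rcases ((W : Set (Evec d)) ∩ Metric.sphere 0 1).eq_empty_or_nonempty with he | hne
    · exact ⟨1, one_pos, by simp [he]⟩
    · obtain ⟨h, hh, hmin⟩ := hK.exists_isMinOn hne (continuous_shortfall ν).continuousOn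
      refine ⟨shortfall ν h, hpos h hh.1 ?_, hmin⟩
      rintro rfl
      simpa using hh.2
  obtain ⟨n, hn⟩ := exists_nat_ge (1 / c)
  refine ⟨n, fun v => ?_⟩
  set h := momentMap ν v with hh
  rcases eq_or_ne h 0 with h0 | h0
  · rw [h0, norm_zero]
    exact mul_nonneg (by positivity) (shortfall_nonneg ν _)
  · have hn0 : 0 < ‖h‖ := norm_pos_iff.2 h0
    have h1 := hcb (‖h‖⁻¹ • h) ⟨W.smul_mem _ (LinearMap.mem_range_self _ v), by
      simp [norm_smul, hn0.ne']⟩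
    rw [shortfall_smul ν (by positivity), ← div_eq_inv_mul, le_div_iff₀ hn0] at h1
    have h2 : 1 ≤ ((n : ℝ) + 1) * c := by
      rw [div_le_iff₀ hc] at hn; nlinarith
    calc ‖h‖ ≤ (((n : ℝ) + 1) * c) * ‖h‖ := le_mul_of_one_le_left hn0.le h2
      _ = ((n : ℝ) + 1) * (c * ‖h‖) := by ring
      _ ≤ _ := mul_le_mul_of_nonneg_left h1 (by positivity)

lemma affineSpan_support_le_range :
    (affineSpan ℝ ν.support : Set (Evec d)) ⊆ LinearMap.range (momentMap ν) := by
  have hs : ν.support ⊆ (LinearMap.range (momentMap ν) : Set (Evec d)) :=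
    Measure.support_subset_of_isClosed (Submodule.closed_of_finiteDimensional _)
      (ae_mem_range_momentMap ν)
  have := affineSpan_le (Q := (LinearMap.range (momentMap ν)).toAffineSubspace).2 hs
  exact this

/-- The point `p` of the affine hull closest to `0` satisfies `p·x ≥ ‖p‖²` on the support, so its
shortfall vanishes and the bound forces `p = 0`. -/
lemma zero_mem_affineSpan_support {n : ℝ}
    (hb : ∀ v, ‖momentMap ν v‖ ≤ n * shortfall ν (momentMap ν v)) :
    (0 : Evec d) ∈ affineSpan ℝ ν.support := by
  set D := affineSpan ℝ ν.support with hD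
  have hne : (D : Set (Evec d)).Nonempty :=
    (affineSpan_nonempty ℝ).2 (Measure.nonempty_support (IsProbabilityMeasure.ne_zero ν))
  have hcl : IsClosed (D : Set (Evec d)) := D.closed_of_finiteDimensional
  obtain ⟨p, hp, hmin⟩ := exists_norm_eq_iInf_of_complete_convex hne hcl.isComplete D.convex 0
  have hin := (norm_eq_iInf_iff_real_inner_le_zero D.convex hp).1 hmin
  obtain ⟨v, hv⟩ := affineSpan_support_le_range ν hp
  have h0 : shortfall ν p = 0 := by
    rw [shortfall_eq_zero_iff]
    filter_upwards [Measure.support_mem_ae (μ := ν)] with x hx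
    have h1 := hin x (subset_affineSpan ℝ _ hx)
    rw [zero_sub, inner_neg_left, inner_sub_right] at h1
    linarith [real_inner_self_nonneg (x := p)]
  have h1 := hb v
  rw [hv, h0, mul_zero] at h1
  rwa [← norm_le_zero_iff.1 h1]

/-- With `a = 1 / (2n)` and `B` the event `h·x ≤ -a‖h‖`, the shortfall integrand is at most `‖h‖` on
`B` and at most `a‖h‖` off `B`, so `‖h‖ / n ≤ ‖h‖ ν(B) + a‖h‖`, that is `ν(B) ≥ a`. -/
lemma le_measure_of_bound {n : ℝ} (hn : 1 ≤ n) (h : Evec d)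
    (hb : ‖h‖ ≤ n * shortfall ν h) :
    ENNReal.ofReal (1 / (2 * n)) ≤ ν {x | ⟪h, x⟫_ℝ ≤ -(1 / (2 * n)) * ‖h‖} := by
  have hn0 : 0 < n := by linarith
  set a := 1 / (2 * n) with ha
  have ha0 : 0 < a := by positivity
  have hna : n * a = 1 / 2 := by rw [ha]; field_simp
  rcases eq_or_ne h 0 with rfl | h0
  · simp only [inner_zero_left, norm_zero, mul_zero, le_refl, ofPred_true, measure_univ]
    rw [ENNReal.ofReal_le_one]
    nlinarith
  have hh : 0 < ‖h‖ := norm_pos_iff.2 h0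
  set B := {x : Evec d | ⟪h, x⟫_ℝ ≤ -a * ‖h‖} with hB
  have hBm : MeasurableSet B := measurableSet_le (by fun_prop) measurable_const
  have hle : shortfall ν h ≤ ‖h‖ * ν.real B + a * ‖h‖ := by
    have hi : Integrable (B.indicator fun _ => ‖h‖) ν := (integrable_const _).indicator hBm
    calc shortfall ν h ≤ ∫ x, (B.indicator (fun _ => ‖h‖) x + a * ‖h‖) ∂ν := by
          refine integral_mono (integrable_shortfall ν h) (hi.add (integrable_const _)) fun x => ?_
          by_cases hx : x ∈ B
          · simp only [indicator_of_mem hx]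
            have := shortfall_integrand_le h x
            nlinarith
          · simp only [indicator_of_notMem hx, zero_add]
            refine max_le (by positivity) ?_
            have hxB : -a * ‖h‖ < ⟪h, x⟫_ℝ := not_le.1 hx
            rw [inner_squash]
            have hr0 : 0 < (1 + ‖x‖)⁻¹ := by positivity
            have hr1 : (1 + ‖x‖)⁻¹ ≤ 1 := inv_le_one_of_one_le₀ (by linarith [norm_nonneg x])
            have hah : 0 < a * ‖h‖ := by positivity
            nlinarith
      _ = ‖h‖ * ν.real B + a * ‖h‖ := by
          rw [integral_add hi (integrable_const _), integral_indicator_const _ hBm]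
          simp [mul_comm]
  have hreal : a ≤ ν.real B := by
    have h1 : ‖h‖ ≤ n * (‖h‖ * ν.real B + a * ‖h‖) :=
      hb.trans (mul_le_mul_of_nonneg_left hle hn0.le)
    have h2 : ‖h‖ * 1 ≤ ‖h‖ * (n * ν.real B + n * a) := by linarith
    have h3 := le_of_mul_le_mul_left h2 hh
    have h4 : n * a ≤ n * ν.real B := by linarith
    exact le_of_mul_le_mul_left h4 hn0
  exact ENNReal.ofReal_le_of_le_toReal hreal

end OneMeasure

/-! ### One-period markets under a kernel -/

lemma measurable_shortfall {X : Type*} [MeasurableSpace X] (κ : Kernel X (Evec d))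
    (h : Evec d) : Measurable fun ω => shortfall (κ ω) h :=
  ((continuous_shortfall_integrand h).stronglyMeasurable.integral_kernel (κ := κ)).measurable

lemma measurable_momentMap {X : Type*} [MeasurableSpace X] (κ : Kernel X (Evec d))
    [IsMarkovKernel κ] (v : Evec d) : Measurable fun ω => momentMap (κ ω) v := by
  have hc := continuous_squash (d := d)
  have hf : Continuous fun x : Evec d => ⟪v, squash x⟫_ℝ • squash x := by fun_prop
  exact (hf.stronglyMeasurable.integral_kernel (κ := κ)).measurable

lemma measurable_shortfall_momentMap {X : Type*} [MeasurableSpace X] (κ : Kernel X (Evec d))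
    [IsMarkovKernel κ] (v : Evec d) :
    Measurable fun ω => shortfall (κ ω) (momentMap (κ ω) v) := by
  have h : Measurable (Function.uncurry fun h ω => shortfall (κ ω) h) := by
    exact measurable_uncurry_of_continuous_of_measurable
      (fun ω => continuous_shortfall (κ ω)) (measurable_shortfall κ)
  exact h.comp ((measurable_momentMap κ v).prodMk measurable_id)

/-- Quantitative no-arbitrage for one period, where `κ ω` is the conditional law of the increment
and strategies are measurable functions of `ω`. -/
theorem local_quantitative {X : Type*} [MeasurableSpace X] (μ : Measure X)
    [IsProbabilityMeasure μ] (κ : Kernel X (Evec d)) [IsMarkovKernel κ]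
    (hNA : ∀ φ : X → Evec d, Measurable φ → (∀ᵐ ω ∂μ, ∀ᵐ x ∂κ ω, 0 ≤ ⟪φ ω, x⟫_ℝ) →
      ∀ᵐ ω ∂μ, ∀ᵐ x ∂κ ω, ⟪φ ω, x⟫_ℝ = 0) :
    ∃ A : Set X, MeasurableSet A ∧ μ A = 1 ∧
      ∃ α : X → ℝ, Measurable α ∧ (∀ ω, α ω ∈ Set.Ioc (0 : ℝ) 1) ∧
        ∀ ω ∈ A, (0 : Evec d) ∈ affineSpan ℝ (κ ω).support ∧
          ∀ h ∈ affineSpan ℝ (κ ω).support,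
            ENNReal.ofReal (α ω) ≤ κ ω {x | ⟪h, x⟫_ℝ ≤ -(α ω) * ‖h‖} := by
  classical
  choose p hpm hp using fun v : Evec d => exists_measurable_proj (fun ω => shortfall (κ ω))
    (measurable_shortfall κ) (fun ω => continuous_shortfall (κ ω))
    (fun ω => shortfall_nonneg (κ ω)) (fun ω => convex_shortfall_zero (κ ω))
    (fun ω => ⟨0, by simp [shortfall]⟩) v
  set e : ℕ → Evec d := TopologicalSpace.denseSeq (Evec d) with he
  have hdense : DenseRange e := TopologicalSpace.denseRange_denseSeq _
  have hproj : ∀ᵐ ω ∂μ, ∀ k, shortfall (κ ω) (-(p (e k) ω)) = 0 := by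
    refine ae_all_iff.2 fun k => ?_
    have h1 := hNA (p (e k)) (hpm _) (Eventually.of_forall fun ω =>
      (shortfall_eq_zero_iff _ _).1 (hp (e k) ω).1)
    filter_upwards [h1] with ω hω
    rw [shortfall_eq_zero_iff]
    filter_upwards [hω] with x hx
    rw [inner_neg_left, hx, neg_zero]
  -- a point `c` of the cone is a limit of projections: the projection of `e k` is at most as far
  -- from `e k` as `c` is
  have hpt : ∀ᵐ ω ∂μ, ∀ h, shortfall (κ ω) h = 0 → shortfall (κ ω) (-h) = 0 := by
    filter_upwards [hproj] with ω hω c hc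
    have hcl : IsClosed {h | shortfall (κ ω) (-h) = 0} :=
      isClosed_eq ((continuous_shortfall (κ ω)).comp continuous_neg) continuous_const
    have hmem : c ∈ closure {h | shortfall (κ ω) (-h) = 0} := by
      rw [Metric.mem_closure_iff]
      intro ε hε
      obtain ⟨k, hk⟩ := hdense.exists_dist_lt c (half_pos hε)
      refine ⟨p (e k) ω, hω k, ?_⟩
      have h1 := (hp (e k) ω).2 c hc
      rw [← dist_eq_norm, ← dist_eq_norm, dist_comm (e k) c] at h1
      linarith [dist_triangle c (e k) (p (e k) ω)]
    rwa [hcl.closure_eq] at hmem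
  -- asked only along a dense sequence, so that the condition is measurable in `ω`
  let Q : X → ℕ → Prop := fun ω n =>
    ∀ k, ‖momentMap (κ ω) (e k)‖ ≤ ((n : ℝ) + 1) * shortfall (κ ω) (momentMap (κ ω) (e k))
  have hQm : ∀ n, MeasurableSet {ω | Q ω n} := by
    intro n
    rw [show {ω | Q ω n} = ⋂ k, {ω | ‖momentMap (κ ω) (e k)‖ ≤
      ((n : ℝ) + 1) * shortfall (κ ω) (momentMap (κ ω) (e k))} by ext; simp [Q]]
    exact MeasurableSet.iInter fun k => measurableSet_le (measurable_momentMap κ _).norm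
      ((measurable_shortfall_momentMap κ _).const_mul _)
  have hQall : ∀ ω n, Q ω n → ∀ v,
      ‖momentMap (κ ω) v‖ ≤ ((n : ℝ) + 1) * shortfall (κ ω) (momentMap (κ ω) v) := by
    intro ω n hQ v
    have hMc : Continuous (momentMap (κ ω)) := LinearMap.continuous_of_finiteDimensional _
    exact hdense.induction_on (p := fun v => ‖momentMap (κ ω) v‖ ≤
      ((n : ℝ) + 1) * shortfall (κ ω) (momentMap (κ ω) v)) v
      (isClosed_le hMc.norm (continuous_const.mul ((continuous_shortfall (κ ω)).comp hMc))) hQ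
  have hAm : MeasurableSet {ω | ∃ n, Q ω n} := by
    rw [show {ω | ∃ n, Q ω n} = ⋃ n, {ω | Q ω n} by ext; simp]
    exact MeasurableSet.iUnion hQm
  -- the second alternative makes the least index defined (as `0`) also where no bound holds
  have hex : ∀ ω, ∃ n, Q ω n ∨ ¬ ∃ m, Q ω m := fun ω => by
    by_cases h : ∃ m, Q ω m
    · exact h.imp fun _ => Or.inl
    · exact ⟨0, Or.inr h⟩
  have hNm : Measurable fun ω => Nat.find (hex ω) :=
    measurable_find hex fun n => (hQm n).union hAm.compl
  refine ⟨{ω | ∃ n, Q ω n}, hAm, ?_, fun ω => 1 / (2 * ((Nat.find (hex ω) : ℝ) + 1)),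
    (measurable_from_nat (f := fun n : ℕ => 1 / (2 * ((n : ℝ) + 1)))).comp hNm,
    fun ω => ⟨by positivity, ?_⟩, fun ω hω => ?_⟩
  · rw [← mem_ae_iff_prob_eq_one hAm]
    filter_upwards [hpt] with ω hω
    obtain ⟨n, hn⟩ := exists_bound_of_pointwise_NA (κ ω) hω
    exact ⟨n, fun k => hn _⟩
  · rw [div_le_one (by positivity)]
    linarith [(Nat.cast_nonneg (Nat.find (hex ω)) : (0 : ℝ) ≤ _)]
  · have hQ : Q ω (Nat.find (hex ω)) := (Nat.find_spec (hex ω)).resolve_right (not_not.2 hω)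
    have hb := hQall ω _ hQ
    refine ⟨zero_mem_affineSpan_support (κ ω) hb, fun h hh => ?_⟩
    obtain ⟨v, rfl⟩ := affineSpan_support_le_range (κ ω) hh
    exact le_measure_of_bound (κ ω)
      (by linarith [(Nat.cast_nonneg (Nat.find (hex ω)) : (0 : ℝ) ≤ _)]) _ (hb v)

end Abstract

/-! ### Reduction of the multi-period market to one period -/

lemma Pmes_succ (q : ∀ t, Kernel (Hist Ωs t) (Ωs (t + 1))) [∀ t, IsMarkovKernel (q t)] (t : ℕ)
    [IsProbabilityMeasure (Pmes q t)] :
    Pmes q (t + 1) = (Pmes q t) ⊗ₘ (q t) := by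
  rw [Measure.compProd_eq_comp_prod]
  have : ⇑(Kernel.id ×ₖ q t) =
      fun ω => ((q t) ω).map (fun y => ((ω, y) : Hist Ωs t × Ωs (t + 1))) := by
    funext ω
    rw [Kernel.prod_apply, Kernel.id_apply, Measure.dirac_prod]
  rw [this]
  rfl

instance isProbabilityMeasure_Pmes (q : ∀ t, Kernel (Hist Ωs t) (Ωs (t + 1)))
    [∀ t, IsMarkovKernel (q t)] : ∀ t, IsProbabilityMeasure (Pmes q t)
  | 0 => inferInstanceAs (IsProbabilityMeasure (Measure.dirac PUnit.unit))
  | t + 1 => by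
    have := isProbabilityMeasure_Pmes q t
    rw [Pmes_succ]
    exact inferInstanceAs (IsProbabilityMeasure ((Pmes q t) ⊗ₘ (q t)))

lemma measurable_deltaS_uncurry (S : ∀ t, Hist Ωs t → Evec d) (hS : ∀ t, Measurable (S t))
    (t : ℕ) : Measurable fun p : Hist Ωs t × Ωs (t + 1) => deltaS S t p.1 p.2 := by
  have h1 : Measurable fun p : Hist Ωs t × Ωs (t + 1) => S (t + 1) p := hS (t + 1)
  exact h1.sub ((hS t).comp measurable_fst)

/-- The conditional law of `ΔS_{t+1}(ω, ·)` under `q_{t+1}(· | ω)`, as a kernel in `ω`. -/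
def incrementKernel (q : ∀ t, Kernel (Hist Ωs t) (Ωs (t + 1))) (S : ∀ t, Hist Ωs t → Evec d)
    (t : ℕ) : Kernel (Hist Ωs t) (Evec d) :=
  (Kernel.id ×ₖ q t).map fun p => deltaS S t p.1 p.2

section Increment

variable (q : ∀ t, Kernel (Hist Ωs t) (Ωs (t + 1))) [∀ t, IsMarkovKernel (q t)]
  (S : ∀ t, Hist Ωs t → Evec d) (t : ℕ)

lemma measurable_deltaS_s4 (hS : ∀ t, Measurable (S t)) (ω : Hist Ωs t) :
    Measurable (deltaS S t ω) :=
  (measurable_deltaS_uncurry S hS t).comp measurable_prodMk_left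

lemma incrementKernel_apply (hS : ∀ t, Measurable (S t)) (ω : Hist Ωs t) :
    incrementKernel q S t ω = (q t ω).map (deltaS S t ω) := by
  rw [incrementKernel, Kernel.map_apply _ (measurable_deltaS_uncurry S hS t), Kernel.prod_apply,
    Kernel.id_apply, Measure.dirac_prod,
    Measure.map_map (measurable_deltaS_uncurry S hS t) measurable_prodMk_left]
  rfl

lemma isMarkovKernel_incrementKernel (hS : ∀ t, Measurable (S t)) :
    IsMarkovKernel (incrementKernel q S t) :=
  Kernel.IsMarkovKernel.map _ (measurable_deltaS_uncurry S hS t)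

lemma suppK_eq_support (hS : ∀ t, Measurable (S t)) (ω : Hist Ωs t) :
    suppK q S t ω = (incrementKernel q S t ω).support := by
  have := isMarkovKernel_incrementKernel q S t hS
  rw [suppK, Measure.support_eq_sInter]
  congr 1
  ext A
  refine and_congr_right fun hA => ?_
  rw [prob_compl_eq_zero_iff hA.measurableSet, incrementKernel_apply q S t hS,
    Measure.map_apply (measurable_deltaS_s4 S t hS ω) hA.measurableSet]
  rfl

end Increment

/-- The strategy that holds `φ` over the period `(t, t+1]` and nothing at any other time. -/
def onePeriod {Om : ℕ → Type} (t : ℕ) (φ : Hist Om t → Evec d) : ∀ s, Hist Om s → Evec d :=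
  fun s => if h : s = t then h ▸ φ else 0

lemma onePeriod_self {Om : ℕ → Type} (t : ℕ) (φ : Hist Om t → Evec d) : onePeriod t φ t = φ := by
  simp [onePeriod]

lemma onePeriod_of_ne {Om : ℕ → Type} {s t : ℕ} (h : s ≠ t) (φ : Hist Om t → Evec d) :
    onePeriod t φ s = 0 := by
  simp [onePeriod, h]

lemma measurable_onePeriod (t : ℕ) {φ : Hist Ωs t → Evec d} (hφ : Measurable φ) (s : ℕ) :
    Measurable (onePeriod t φ s) := by
  by_cases h : s = t
  · subst h; rwa [onePeriod_self]
  · rw [onePeriod_of_ne h]; exact measurable_const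

lemma Vval_onePeriod_of_le {Om : ℕ → Type} (S : ∀ t, Hist Om t → Evec d) (t : ℕ)
    (φ : Hist Om t → Evec d) :
    ∀ s, s ≤ t → ∀ ω, Vval S (onePeriod t φ) 0 s ω = 0
  | 0, _, _ => rfl
  | s + 1, hs, ω => by
    have h1 := Vval_onePeriod_of_le S t φ s (by omega) ω.1
    have h2 : onePeriod t φ s = 0 := onePeriod_of_ne (by omega) φ
    simp [Vval, h1, h2]

lemma Vval_onePeriod_succ {Om : ℕ → Type} (S : ∀ t, Hist Om t → Evec d) (t : ℕ)
    (φ : Hist Om t → Evec d) (ω : Hist Om t) (y : Om (t + 1)) :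
    Vval S (onePeriod t φ) 0 (t + 1) ((ω, y) : Hist Om t × Om (t + 1)) =
      ⟪φ ω, deltaS S t ω y⟫_ℝ := by
  simp [Vval, Vval_onePeriod_of_le S t φ t le_rfl, onePeriod_self]

lemma measurable_Vval {S : ∀ t, Hist Ωs t → Evec d} (hS : ∀ t, Measurable (S t))
    {φ : ∀ t, Hist Ωs t → Evec d} (hφ : ∀ t, Measurable (φ t)) (x : ℝ) :
    ∀ t, Measurable (Vval S φ x t)
  | 0 => measurable_const
  | t + 1 => by
    have h1 : Measurable fun p : Hist Ωs t × Ωs (t + 1) => Vval S φ x t p.1 :=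
      (measurable_Vval hS hφ x t).comp measurable_fst
    have h2 : Measurable fun p : Hist Ωs t × Ωs (t + 1) => φ t p.1 :=
      (hφ t).comp measurable_fst
    exact h1.add (h2.inner (measurable_deltaS_uncurry S hS t))

open Filter in
/-- Almost sure statements about the terminal wealth of a one-period strategy are statements about
its conditional gain over that period: later periods change neither the wealth nor the marginal
law of the past. -/
lemma ae_Vval_onePeriod_iff (q : ∀ t, Kernel (Hist Ωs t) (Ωs (t + 1)))
    [∀ t, IsMarkovKernel (q t)] {S : ∀ t, Hist Ωs t → Evec d} (hS : ∀ t, Measurable (S t))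
    (t : ℕ) {φ : Hist Ωs t → Evec d} (hφ : Measurable φ) {B : Set ℝ} (hB : MeasurableSet B)
    (T : ℕ) (hT : t + 1 ≤ T) :
    (∀ᵐ ω ∂(Pmes q T), Vval S (onePeriod t φ) 0 T ω ∈ B) ↔
      ∀ᵐ ω ∂(Pmes q t), ∀ᵐ y ∂(q t ω), ⟪φ ω, deltaS S t ω y⟫_ℝ ∈ B := by
  have hV := measurable_Vval hS (measurable_onePeriod t hφ) 0
  have hstep : ∀ s, (∀ᵐ ω ∂(Pmes q (s + 1)), Vval S (onePeriod t φ) 0 (s + 1) ω ∈ B) ↔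
      ∀ᵐ ω ∂(Pmes q s), ∀ᵐ y ∂(q s ω),
        Vval S (onePeriod t φ) 0 (s + 1) ((ω, y) : Hist Ωs s × Ωs (s + 1)) ∈ B := by
    intro s
    rw [Pmes_succ]
    exact Measure.ae_compProd_iff (hV (s + 1) hB)
  induction T, hT using Nat.le_induction with
  | base =>
    rw [hstep]
    simp only [Vval_onePeriod_succ]
  | succ T hT ih =>
    refine (hstep T).trans (Iff.trans ?_ ih)
    have h2 : onePeriod t φ T = 0 := onePeriod_of_ne (by omega) φ
    refine eventually_congr (Eventually.of_forall fun ω => ?_)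
    simp [Vval, h2]

/-- (Quantitative no-arbitrage.) Under (NA), for `0 ≤ t ≤ T−1` there
exist `Ω^t_{NA} ∈ ℱ_t` of full `P_t`-measure and an `ℱ_t`-measurable
`α_t : Ω^t → (0,1]` such that for every `ω^t ∈ Ω^t_{NA}`, `D^{t+1}(ω^t)` is a vector
subspace and for every `h ∈ D^{t+1}(ω^t)`:
`q_{t+1}(h·ΔS_{t+1}(ω^t,·) ≤ −α_t(ω^t)|h| | ω^t) ≥ α_t(ω^t)`. -/
theorem quantitative_no_arbitrage
    (q : ∀ t, Kernel (Hist Ωs t) (Ωs (t + 1))) [∀ t, IsMarkovKernel (q t)]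
    (S : ∀ t, Hist Ωs t → Evec d) (hS : ∀ t, Measurable (S t))
    (T : ℕ) (hNA : NAcond q S T) (t : ℕ) (ht : t + 1 ≤ T) :
    ∃ A : Set (Hist Ωs t), MeasurableSet[histMS Ωs t] A ∧ Pmes q t A = 1 ∧
      ∃ α : Hist Ωs t → ℝ, Measurable α ∧ (∀ ω, α ω ∈ Set.Ioc (0 : ℝ) 1) ∧
        ∀ ω ∈ A,
          (∃ W : Submodule ℝ (Evec d), (W : Set (Evec d)) = Dset q S t ω) ∧
          ∀ h ∈ Dset q S t ω,
            ENNReal.ofReal (α ω) ≤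
              (q t) ω {y | ⟪h, deltaS S t ω y⟫_ℝ ≤ -(α ω) * ‖h‖} := by
  have hκ := isMarkovKernel_incrementKernel q S t hS
  obtain ⟨A, hA, hA1, α, hα, hα01, hmain⟩ :=
    local_quantitative (Pmes q t) (incrementKernel q S t) fun φ hφ h => by
      have htr : ∀ B : Set ℝ, MeasurableSet B →
          ((∀ᵐ ω ∂(Pmes q t), ∀ᵐ x ∂(incrementKernel q S t ω), ⟪φ ω, x⟫_ℝ ∈ B) ↔
            ∀ᵐ ω ∂(Pmes q T), Vval S (onePeriod t φ) 0 T ω ∈ B) := by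
        intro B hB
        rw [ae_Vval_onePeriod_iff q hS t hφ hB T ht]
        refine Filter.eventually_congr (Filter.Eventually.of_forall fun ω => ?_)
        rw [incrementKernel_apply q S t hS, ae_map_iff (measurable_deltaS_s4 S t hS ω).aemeasurable]
        exact (measurable_const.inner measurable_id) hB
      have h0 := hNA (onePeriod t φ) (measurable_onePeriod t hφ)
        ((htr (Set.Ici 0) measurableSet_Ici).1 h)
      exact (htr {0} (measurableSet_singleton 0)).2 h0
  refine ⟨A, hA, hA1, α, hα, hα01, fun ω hω => ?_⟩
  obtain ⟨h0, hq⟩ := hmain ω hω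
  have hD : Dset q S t ω = (affineSpan ℝ (incrementKernel q S t ω).support : Set (Evec d)) := by
    rw [Dset, suppK_eq_support q S t hS]
  refine ⟨⟨(affineSpan ℝ (incrementKernel q S t ω).support).direction, ?_⟩, fun h hh => ?_⟩
  · rw [hD]
    ext x
    simpa using AffineSubspace.vsub_right_mem_direction_iff_mem h0 x
  · rw [hD] at hh
    have h1 := hq h hh
    have hm : MeasurableSet {x : Evec d | ⟪h, x⟫_ℝ ≤ -(α ω) * ‖h‖} :=
      measurableSet_le (measurable_const.inner measurable_id) measurable_const
    rw [incrementKernel_apply q S t hS,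
      Measure.map_apply (measurable_deltaS_s4 S t hS ω) hm] at h1
    exact h1
end
end

section
/- Assume there exists α ∈ (0,1] such that Q(h·Y ≤ −α|h|) ≥ α for all h ∈ D. Then for every x ≥ 0 the set D_x is contained in the closed ball B(0, x/α) = {h ∈ ℝ^d : |h| ≤ x/α}, and D_x is a convex compact subset of ℝ^d (in particular D_0 = {0}). -/
/-!
If `h ∈ D_x`, the event `x + h·Y ≥ 0` has full measure, so it meets the event
`h·Y ≤ -α|h|`, which has measure at least `α > 0`. At a common point `α|h| ≤ -h·Y ≤ x`,
which is the bound `|h| ≤ x/α`. Membership in `𝓗_x` is an almost sure non-strict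
affine inequality in `h`, so `𝓗_x` is convex and closed (a convergent sequence in `𝓗_x` only
involves countably many null sets); `D` is an affine subspace of a finite-dimensional space,
hence convex and closed too. Compactness of `D_x` is then Heine–Borel, and `D_0 = {0}` follows
from the bound at `x = 0`.
-/

open MeasureTheory ProbabilityTheory Set
open scoped ENNReal InnerProductSpace

noncomputable section

variable {d : ℕ} {Ω : Type*} [MeasurableSpace Ω]

/-- The support of the law of `Y` under `Q`: the intersection of all closed sets `A`
with `Q(Y ∈ A) = 1`. -/
def suppY (Q : Measure Ω) (Y : Ω → Evec d) : Set (Evec d) :=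
  ⋂₀ {A : Set (Evec d) | IsClosed A ∧ Q (Y ⁻¹' A) = 1}

/-- `D`: the smallest affine subspace of `ℝ^d` containing the support of the law of `Y`. -/
def Dv (Q : Measure Ω) (Y : Ω → Evec d) : Set (Evec d) :=
  (affineSpan ℝ (suppY Q Y) : Set (Evec d))

/-- `𝓗_x := {h ∈ ℝ^d : Q(x + h·Y ≥ 0) = 1}`. -/
def Hx (Q : Measure Ω) (Y : Ω → Evec d) (x : ℝ) : Set (Evec d) :=
  {h | Q {ω | 0 ≤ x + ⟪h, Y ω⟫_ℝ} = 1}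

/-- `D_x := 𝓗_x ∩ D`. -/
def Dx (Q : Measure Ω) (Y : Ω → Evec d) (x : ℝ) : Set (Evec d) := Hx Q Y x ∩ Dv Q Y

lemma mem_Hx_iff_ae {Q : Measure Ω} [IsProbabilityMeasure Q] {Y : Ω → Evec d}
    (hY : Measurable Y) {x : ℝ} {h : Evec d} :
    h ∈ Hx Q Y x ↔ ∀ᵐ ω ∂Q, 0 ≤ x + ⟪h, Y ω⟫_ℝ := by
  have hm : MeasurableSet {ω | 0 ≤ x + ⟪h, Y ω⟫_ℝ} :=
    measurableSet_le measurable_const (by fun_prop)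
  exact (mem_ae_iff_prob_eq_one hm).symm

lemma convex_Hx {Q : Measure Ω} [IsProbabilityMeasure Q] {Y : Ω → Evec d}
    (hY : Measurable Y) (x : ℝ) : Convex ℝ (Hx Q Y x) := by
  intro h hh k hk a b ha hb hab
  rw [mem_Hx_iff_ae hY] at hh hk ⊢
  filter_upwards [hh, hk] with ω h1 h2
  have hsplit : x + ⟪a • h + b • k, Y ω⟫_ℝ
      = a * (x + ⟪h, Y ω⟫_ℝ) + b * (x + ⟪k, Y ω⟫_ℝ) := by
    rw [inner_add_left, real_inner_smul_left, real_inner_smul_left]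
    linear_combination (-x) * hab
  rw [hsplit]
  positivity

lemma isClosed_Hx {Q : Measure Ω} [IsProbabilityMeasure Q] {Y : Ω → Evec d}
    (hY : Measurable Y) (x : ℝ) : IsClosed (Hx Q Y x) := by
  refine IsSeqClosed.isClosed fun u h hu hlim => ?_
  simp only [mem_Hx_iff_ae hY] at hu ⊢
  filter_upwards [ae_all_iff.2 hu] with ω hω
  have hcont : Continuous fun k : Evec d => x + ⟪k, Y ω⟫_ℝ := by fun_prop
  exact ge_of_tendsto' ((hcont.tendsto h).comp hlim) hω

lemma Dx_subset_closedBall {Q : Measure Ω} [IsProbabilityMeasure Q] {Y : Ω → Evec d}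
    (hY : Measurable Y) {α : ℝ} (hα : 0 < α)
    (hNA : ∀ h ∈ Dv Q Y, ENNReal.ofReal α ≤ Q {ω | ⟪h, Y ω⟫_ℝ ≤ -α * ‖h‖}) (x : ℝ) :
    Dx Q Y x ⊆ Metric.closedBall (0 : Evec d) (x / α) := by
  rintro h ⟨hH, hD⟩
  have hae := (mem_Hx_iff_ae hY).1 hH
  have hpos : Q {ω | ⟪h, Y ω⟫_ℝ ≤ -α * ‖h‖} ≠ 0 :=
    ((ENNReal.ofReal_pos.2 hα).trans_le (hNA h hD)).ne'
  obtain ⟨ω, hω, hω'⟩ := ((frequently_ae_iff.2 hpos).and_eventually hae).exists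
  rw [mem_closedBall_zero_iff, le_div_iff₀ hα]
  linarith

/-- Under quantitative no-arbitrage (`Q(h·Y ≤ −α|h|) ≥ α` for all
`h ∈ D`, with `α ∈ (0,1]`): for every `x ≥ 0`, `D_x ⊆ B(0, x/α)` and `D_x` is a
convex compact subset of `ℝ^d`; in particular `D_0 = {0}`. -/
theorem Dx_subset_ball_convex_compact
    (Q : Measure Ω) [IsProbabilityMeasure Q] (Y : Ω → Evec d) (hY : Measurable Y)
    (h0D : (0 : Evec d) ∈ Dv Q Y)
    (α : ℝ) (hα : α ∈ Set.Ioc (0 : ℝ) 1)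
    (hNA : ∀ h ∈ Dv Q Y, ENNReal.ofReal α ≤ Q {ω | ⟪h, Y ω⟫_ℝ ≤ -α * ‖h‖}) :
    (∀ x : ℝ, 0 ≤ x →
      Dx Q Y x ⊆ Metric.closedBall (0 : Evec d) (x / α) ∧
      Convex ℝ (Dx Q Y x) ∧ IsCompact (Dx Q Y x)) ∧
    Dx Q Y 0 = {(0 : Evec d)} := by
  have hball := Dx_subset_closedBall hY hα.1 hNA
  refine ⟨fun x _ => ⟨hball x, ?_, ?_⟩, ?_⟩
  · exact (convex_Hx hY x).inter (affineSpan ℝ (suppY Q Y)).convex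
  · have hclosed : IsClosed (Dx Q Y x) :=
      (isClosed_Hx hY x).inter (AffineSubspace.closed_of_finiteDimensional _)
    exact (isCompact_closedBall _ _).of_isClosed_subset hclosed (hball x)
  · refine Subset.antisymm ?_ ?_
    · simpa using hball 0
    · rintro _ rfl
      exact ⟨(mem_Hx_iff_ae hY).2 (by simp), h0D⟩
end
end
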